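/- Hamilton–Jacobi theorem, hyperbolic case: the renormalized value function v is a viscosity solution on Ω of the Hamilton–Jacobi equation ½‖∇v‖_M² − U = ‖a‖_M²/2; that is, for every x ∈ Ω, one has ½‖p‖_M² − U(x) ≤ ‖a‖_M²/2 for all p ∈ D⁺v(x) and ½‖p‖_M² − U(x) ≥ ‖a‖_M²/2 for all p ∈ D⁻v(x). -/

import Mathlib

/-!
A motion from `x` followed for a short time `τ` and then continued optimally gives the dynamic
programming principle for the value function. Prepending the straight segment of velocity `-p` to
near-minimizers issuing from `x - τ p` bounds `v(x) - v(x - τ p)` from above to first order in `τ`,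
which is the inequality for `p ∈ D⁺v(x)`.

Conversely, a near-minimizer from `x` is cut at time `1 + τ`, where it has reached `x + τ w`.
Coercivity of the action bounds its kinetic energy, so it stays near `x` uniformly in the choice of
near-minimizer. Cauchy–Schwarz then bounds the action spent on `[1, 1 + τ]` from below by
`τ (½‖w - a‖² + U(x) - ε)`, and Young's inequality absorbs `⟨p, w⟩`; no minimizer is ever needed.

The value function is finite because a motion may pass through total collision: along
`γ(s) = s ^ (2/3) x` both `‖γ̇‖²` and `U(γ)` are of order `s ^ (-2/3)`, hence integrable at `0`, and
such arcs join `x` to the origin and the origin to `a`, from where the free motion `t a` has zero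
renormalized action.
-/

open MeasureTheory Real Set Filter Topology
open scoped RealInnerProductSpace ENNReal

noncomputable section
namespace NBodyHJ

attribute [local instance] Classical.propDecidable

abbrev Conf (d N : ℕ) := Fin N → EuclideanSpace ℝ (Fin d)

variable {d N : ℕ}

/-- The mass inner product on the configuration space. -/
def minner (m : Fin N → ℝ) (x y : Conf d N) : ℝ := ∑ i, m i * ⟪x i, y i⟫

/-- The mass norm on the configuration space. -/
def mnorm (m : Fin N → ℝ) (x : Conf d N) : ℝ := Real.sqrt (minner m x x)

/-- Membership in the zero-barycenter configuration space `X`. -/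
def inX (m : Fin N → ℝ) (x : Conf d N) : Prop := ∑ i, m i • x i = 0

/-- Collision configurations. -/
def collision (x : Conf d N) : Prop := ∃ i j, i ≠ j ∧ x i = x j

/-- Membership in the collision-free zero-barycenter space `Ω`. -/
def inOmega (m : Fin N → ℝ) (x : Conf d N) : Prop := inX m x ∧ ¬ collision x

/-- The Newtonian potential (with junk value `0` for a colliding pair). -/
def U (m : Fin N → ℝ) (x : Conf d N) : ℝ :=
  ∑ i : Fin N, ∑ j : Fin N, if i < j then m i * m j / ‖x i - x j‖ else 0

/-- The time interval `(t₀, T)`, where `T ∈ (t₀, +∞]` is extended-real. -/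
def timeSet (t0 : ℝ) (T : EReal) : Set ℝ := {t : ℝ | t0 < t ∧ (t : EReal) < T}

/-- Membership of the pair (curve, derivative) `(φ, φ')` in `D₀^{1,2}(t₀, T)`:
`φ` starts at `0`, takes values in `X`, is the integral of `φ'` (hence locally
absolutely continuous), and `φ'` has finite `L²` mass norm on `(t₀, T)`. -/
def InD (m : Fin N → ℝ) (t0 : ℝ) (T : EReal) (φ φ' : ℝ → Conf d N) : Prop :=
  φ t0 = 0 ∧
  (∀ t : ℝ, t0 ≤ t → (t : EReal) < T → inX m (φ t)) ∧
  (∀ t : ℝ, t0 ≤ t → (t : EReal) < T → φ t = ∫ s in Set.Ioc t0 t, φ' s) ∧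
  (∀ t : ℝ, t0 ≤ t → (t : EReal) < T → IntegrableOn φ' (Set.Ioc t0 t)) ∧
  IntegrableOn (fun t => (mnorm m (φ' t)) ^ 2) (timeSet t0 T)

/-- The norm `‖φ‖_{D_T}`. -/
def Dnorm (m : Fin N → ℝ) (t0 : ℝ) (T : EReal) (φ' : ℝ → Conf d N) : ℝ :=
  Real.sqrt (∫ t in timeSet t0 T, (mnorm m (φ' t)) ^ 2)

/-- The motion `γ(t) = φ(t) + t a + x - a` associated with `φ` in the hyperbolic case. -/
def hypCurve (a x : Conf d N) (φ : ℝ → Conf d N) (t : ℝ) : Conf d N :=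
  φ t + t • a + x - a

/-- The integrand of the hyperbolic renormalized Lagrangian action. -/
def hypIntegrand (m : Fin N → ℝ) (a x : Conf d N) (φ φ' : ℝ → Conf d N) (t : ℝ) : ℝ :=
  (mnorm m (φ' t)) ^ 2 / 2 + U m (hypCurve a x φ t) - U m (t • a)

/-- The hyperbolic renormalized Lagrangian action `A_{x,[1,T]}(φ)`, with values in
`ℝ ∪ {+∞}` : it equals the integral of the renormalized Lagrangian if this integrand is
integrable and the motion is a.e. collision-free, and `+∞` otherwise. -/
def hypAction (m : Fin N → ℝ) (a x : Conf d N) (T : EReal) (φ φ' : ℝ → Conf d N) : EReal :=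
  if IntegrableOn (hypIntegrand m a x φ φ') (timeSet 1 T) ∧
      (∀ᵐ t ∂volume.restrict (timeSet 1 T), ¬ collision (hypCurve a x φ t))
  then ((∫ t in timeSet 1 T, hypIntegrand m a x φ φ' t : ℝ) : EReal)
  else (⊤ : EReal)

/-- The infimum of the hyperbolic renormalized action over `D₀^{1,2}(1,T)`. -/
def hypInf (m : Fin N → ℝ) (a x : Conf d N) (T : EReal) : EReal :=
  ⨅ (φ : ℝ → Conf d N) (φ' : ℝ → Conf d N) (_ : InD m 1 T φ φ'), hypAction m a x T φ φ'

/-- The renormalized value function `v(x)` in the hyperbolic case. -/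
def hypValue (m : Fin N → ℝ) (a x : Conf d N) : ℝ :=
  (hypInf m a x ⊤).toReal - minner m a x


/-- The zero-barycenter configuration space `X`, as a set. -/
def setX (m : Fin N → ℝ) : Set (Conf d N) := {x | inX m x}

/-- `p ∈ D⁻v(x)` : the Fréchet subdifferential of `v` at `x`, computed within `X` and with
respect to the mass inner product; the condition states
`liminf_{y → x} (v(y) − v(x) − ⟨p, y − x⟩_M)/‖y − x‖_M ≥ 0`. -/
def InSubdiff (m : Fin N → ℝ) (v : Conf d N → ℝ) (x p : Conf d N) : Prop :=
  ∀ ε > (0:ℝ), ∀ᶠ y in nhdsWithin x (setX m \ {x}),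
    -(ε * mnorm m (y - x)) ≤ v y - v x - minner m p (y - x)

/-- `p ∈ D⁺v(x)` : the Fréchet superdifferential of `v` at `x`, computed within `X` and with
respect to the mass inner product; the condition states
`limsup_{y → x} (v(y) − v(x) − ⟨p, y − x⟩_M)/‖y − x‖_M ≤ 0`. -/
def InSuperdiff (m : Fin N → ℝ) (v : Conf d N → ℝ) (x p : Conf d N) : Prop :=
  ∀ ε > (0:ℝ), ∀ᶠ y in nhdsWithin x (setX m \ {x}),
    v y - v x - minner m p (y - x) ≤ ε * mnorm m (y - x)

/-! ### Integrals -/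

lemma sq_norm_integral_le {α E : Type*} [MeasurableSpace α] [NormedAddCommGroup E]
    [NormedSpace ℝ E] {μ : Measure α} [IsFiniteMeasure μ] {f : α → E} (hf : MemLp f 2 μ) :
    ‖∫ s, f s ∂μ‖ ^ 2 ≤ μ.real univ * ∫ s, ‖f s‖ ^ 2 ∂μ := by
  have hp : Real.HolderConjugate 2 2 := ⟨by norm_num, by norm_num, by norm_num⟩
  have hHolder := integral_mul_le_Lp_mul_Lq_of_nonneg hp (ae_of_all μ fun s => norm_nonneg (f s))
    (ae_of_all μ fun _ => zero_le_one (α := ℝ)) (by simpa using hf.norm)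
    (by simpa using memLp_const (1 : ℝ))
  simp only [mul_one, Real.rpow_ofNat, one_pow, integral_const, smul_eq_mul,
    ← Real.sqrt_eq_rpow] at hHolder
  calc ‖∫ s, f s ∂μ‖ ^ 2 ≤ (√(∫ s, ‖f s‖ ^ 2 ∂μ) * √(μ.real univ)) ^ 2 := by
        gcongr
        exact (norm_integral_le_integral_norm f).trans hHolder
    _ = μ.real univ * ∫ s, ‖f s‖ ^ 2 ∂μ := by
        rw [mul_pow, Real.sq_sqrt (integral_nonneg fun _ => sq_nonneg _),
          Real.sq_sqrt measureReal_nonneg, mul_comm]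

section Translation

variable {E : Type*} [NormedAddCommGroup E]

lemma measurePreserving_add_right_Ioi (t₀ τ : ℝ) :
    MeasurePreserving (· + τ) (volume.restrict (Ioi t₀)) (volume.restrict (Ioi (t₀ + τ))) := by
  simpa using (measurePreserving_add_right volume τ).restrict_preimage_emb
    (measurableEmbedding_addRight τ) (Ioi (t₀ + τ))

lemma integrableOn_comp_add_right_Ioi_iff {f : ℝ → E} {t₀ τ : ℝ} :
    IntegrableOn (fun s => f (s + τ)) (Ioi t₀) ↔ IntegrableOn f (Ioi (t₀ + τ)) :=
  (measurePreserving_add_right_Ioi t₀ τ).integrable_comp_emb (measurableEmbedding_addRight τ)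

lemma integral_comp_add_right_Ioi [NormedSpace ℝ E] (f : ℝ → E) (t₀ τ : ℝ) :
    ∫ s in Ioi t₀, f (s + τ) = ∫ t in Ioi (t₀ + τ), f t :=
  (measurePreserving_add_right_Ioi t₀ τ).integral_comp (measurableEmbedding_addRight τ) f

lemma ae_restrict_Ioi_add_iff {p : ℝ → Prop} {t₀ τ : ℝ} :
    (∀ᵐ t ∂volume.restrict (Ioi (t₀ + τ)), p t) ↔ ∀ᵐ s ∂volume.restrict (Ioi t₀), p (s + τ) := by
  rw [← (measurePreserving_add_right_Ioi t₀ τ).map_eq,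
    (measurableEmbedding_addRight τ).ae_map_iff]

end Translation

section InverseTails

variable {τ : ℝ}

lemma hasDerivAt_log_sub_log_add (hτ : 0 ≤ τ) {s : ℝ} (hs : 0 < s) :
    HasDerivAt (fun s => Real.log s - Real.log (s + τ)) (s⁻¹ - (s + τ)⁻¹) s := by
  simpa using (Real.hasDerivAt_log hs.ne').fun_sub
    (((hasDerivAt_id s).add_const τ).log (by simp only [id]; positivity))

lemma tendsto_log_sub_log_add (τ : ℝ) :
    Tendsto (fun s => Real.log s - Real.log (s + τ)) atTop (𝓝 0) := by
  simpa using (Real.tendsto_log_comp_add_sub_log τ).neg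

lemma inv_sub_inv_add_nonneg (hτ : 0 ≤ τ) {s : ℝ} (hs : 0 < s) : 0 ≤ s⁻¹ - (s + τ)⁻¹ :=
  sub_nonneg.2 (inv_anti₀ hs (le_add_of_nonneg_right hτ))

lemma integrableOn_inv_sub_inv_add {t₀ : ℝ} (ht₀ : 0 < t₀) (hτ : 0 ≤ τ) :
    IntegrableOn (fun s => s⁻¹ - (s + τ)⁻¹) (Ioi t₀) :=
  integrableOn_Ioi_deriv_of_nonneg'
    (fun _ hs => hasDerivAt_log_sub_log_add hτ (ht₀.trans_le hs))
    (fun _ hs => inv_sub_inv_add_nonneg hτ (ht₀.trans hs)) (tendsto_log_sub_log_add τ)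

lemma integral_inv_sub_inv_add {t₀ : ℝ} (ht₀ : 0 < t₀) (hτ : 0 ≤ τ) :
    ∫ s in Ioi t₀, (s⁻¹ - (s + τ)⁻¹) = ∫ t in t₀..t₀ + τ, t⁻¹ := by
  rw [integral_Ioi_of_hasDerivAt_of_nonneg'
    (fun _ hs => hasDerivAt_log_sub_log_add hτ (ht₀.trans_le hs))
    (fun _ hs => inv_sub_inv_add_nonneg hτ (ht₀.trans hs)) (tendsto_log_sub_log_add τ),
    integral_inv_of_pos ht₀ (by positivity), Real.log_div (by positivity) ht₀.ne']
  ring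

lemma intervalIntegrable_const_mul_inv (c : ℝ) {s t : ℝ} (hs : 0 < s) (ht : 0 < t) :
    IntervalIntegrable (fun r => c * r⁻¹) volume s t :=
  (intervalIntegral.intervalIntegrable_inv (fun _ hr => (lt_of_lt_of_le (lt_min hs ht) hr.1).ne')
    continuousOn_id).const_mul c

end InverseTails

/-! ### The mass metric and centred configurations -/

/-- The map `x ↦ (√mᵢ xᵢ)ᵢ`, which for positive masses carries the mass inner product to the
Euclidean one. -/
def massEmbed (m : Fin N → ℝ) :
    Conf d N →L[ℝ] PiLp 2 (fun _ : Fin N => EuclideanSpace ℝ (Fin d)) :=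
  ((PiLp.continuousLinearEquiv 2 ℝ
    (fun _ : Fin N => EuclideanSpace ℝ (Fin d))).symm : _ →L[ℝ] _).comp
    (ContinuousLinearMap.pi fun i => √(m i) • ContinuousLinearMap.proj i)

variable {m : Fin N → ℝ} {a x y p w : Conf d N}

lemma massEmbed_apply (m : Fin N → ℝ) (x : Conf d N) (i : Fin N) :
    massEmbed m x i = √(m i) • x i := rfl

lemma massEmbed_injective (hm : ∀ i, 0 < m i) :
    Function.Injective (massEmbed m : Conf d N →L[ℝ] _) := by
  intro x y h
  ext1 i
  have hi : √(m i) • x i = √(m i) • y i := congrArg (fun z => z i) h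
  exact smul_right_injective _ (Real.sqrt_pos.2 (hm i)).ne' hi

lemma minner_eq_inner (hm : ∀ i, 0 < m i) (x y : Conf d N) :
    minner m x y = ⟪massEmbed m x, massEmbed m y⟫ := by
  rw [PiLp.inner_apply]
  refine Finset.sum_congr rfl fun i _ => ?_
  rw [massEmbed_apply, massEmbed_apply, real_inner_smul_left, real_inner_smul_right, ← mul_assoc,
    Real.mul_self_sqrt (hm i).le]

lemma mnorm_eq_norm (hm : ∀ i, 0 < m i) (x : Conf d N) : mnorm m x = ‖massEmbed m x‖ := by
  rw [mnorm, minner_eq_inner hm, real_inner_self_eq_norm_sq, Real.sqrt_sq (norm_nonneg _)]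

@[simp]
lemma mnorm_zero (m : Fin N → ℝ) : mnorm m (0 : Conf d N) = 0 := by simp [mnorm, minner]

@[simp]
lemma minner_zero_right (m : Fin N → ℝ) (x : Conf d N) : minner m x 0 = 0 := by simp [minner]

lemma minner_smul_right (m : Fin N → ℝ) (x y : Conf d N) (c : ℝ) :
    minner m x (c • y) = c * minner m x y := by
  simp only [minner, Pi.smul_apply, real_inner_smul_right, Finset.mul_sum]
  exact Finset.sum_congr rfl fun i _ => by ring

lemma minner_add_right (m : Fin N → ℝ) (x y z : Conf d N) :
    minner m x (y + z) = minner m x y + minner m x z := by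
  simp only [minner, Pi.add_apply, inner_add_right, mul_add, Finset.sum_add_distrib]

lemma mnorm_smul (hm : ∀ i, 0 < m i) (c : ℝ) (x : Conf d N) :
    mnorm m (c • x) = |c| * mnorm m x := by
  rw [mnorm_eq_norm hm, mnorm_eq_norm hm, map_smul, norm_smul, Real.norm_eq_abs]

lemma minner_neg_self (hm : ∀ i, 0 < m i) (x : Conf d N) : minner m x (-x) = -mnorm m x ^ 2 := by
  rw [minner_eq_inner hm, mnorm_eq_norm hm, map_neg, inner_neg_right, real_inner_self_eq_norm_sq]

lemma neg_mnorm_mul_mnorm_le_minner (hm : ∀ i, 0 < m i) (x y : Conf d N) :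
    -(mnorm m x * mnorm m y) ≤ minner m x y := by
  rw [minner_eq_inner hm, mnorm_eq_norm hm, mnorm_eq_norm hm]
  exact (abs_le.1 (abs_real_inner_le_norm _ _)).1

lemma mnorm_sub_sq (hm : ∀ i, 0 < m i) (x y : Conf d N) :
    mnorm m (x - y) ^ 2 = mnorm m x ^ 2 - 2 * minner m y x + mnorm m y ^ 2 := by
  simp only [mnorm_eq_norm hm, minner_eq_inner hm, map_sub, norm_sub_sq_real, real_inner_comm]

lemma mnorm_neg (m : Fin N → ℝ) (x : Conf d N) : mnorm m (-x) = mnorm m x := by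
  simp [mnorm, minner]

lemma exists_norm_le_mul_mnorm (hm : ∀ i, 0 < m i) :
    ∃ K : ℝ, 0 < K ∧ ∀ x : Conf d N, ‖x‖ ≤ K * mnorm m x := by
  obtain ⟨K, hK, hanti⟩ := (massEmbed m : Conf d N →L[ℝ] _).toLinearMap.exists_antilipschitzWith
    (LinearMap.ker_eq_bot.2 (massEmbed_injective hm))
  refine ⟨K, hK, fun x => ?_⟩
  rw [mnorm_eq_norm hm]
  simpa using hanti.le_mul_dist x 0

lemma inX.add (hx : inX m x) (hy : inX m y) : inX m (x + y) := by
  simp only [inX, Pi.add_apply, smul_add, Finset.sum_add_distrib] at *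
  rw [hx, hy, add_zero]

lemma inX.smul (hx : inX m x) (c : ℝ) : inX m (c • x) := by
  simp only [inX, Pi.smul_apply] at *
  simp_rw [smul_comm _ c, ← Finset.smul_sum, hx, smul_zero]

lemma inX.neg (hx : inX m x) : inX m (-x) := by simpa using hx.smul (-1)

lemma inX.sub (hx : inX m x) (hy : inX m y) : inX m (x - y) := by
  simpa [sub_eq_add_neg] using hx.add hy.neg

/-! ### The Newtonian potential -/

lemma U_smul (m : Fin N → ℝ) (x : Conf d N) {t : ℝ} (ht : 0 ≤ t) :
    U m (t • x) = U m x * t⁻¹ := by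
  simp only [U, Finset.sum_mul, ite_mul, zero_mul, Pi.smul_apply, ← smul_sub, norm_smul,
    Real.norm_of_nonneg ht, div_eq_mul_inv, mul_inv, mul_assoc, mul_comm t⁻¹]

lemma continuousAt_U (m : Fin N → ℝ) (hx : ¬ collision x) : ContinuousAt (U m) x := by
  unfold U
  refine tendsto_finsetSum _ fun i _ => tendsto_finsetSum _ fun j _ => ?_
  split_ifs with hij
  · have hne : ‖x i - x j‖ ≠ 0 :=
      norm_ne_zero_iff.2 (sub_ne_zero.2 fun h => hx ⟨i, j, hij.ne, h⟩)
    exact ContinuousAt.div (f := fun _ : Conf d N => m i * m j) (by fun_prop) (by fun_prop) hne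
  · exact tendsto_const_nhds

lemma isOpen_setOf_not_collision : IsOpen {x : Conf d N | ¬ collision x} := by
  have : {x : Conf d N | ¬ collision x} = ⋂ i, ⋂ j, {x | i ≠ j → x i ≠ x j} := by
    ext x
    simp [collision]
  rw [this]
  refine isOpen_iInter_of_finite fun i => isOpen_iInter_of_finite fun j => ?_
  by_cases hij : i = j
  · simp [hij]
  · simpa [hij] using isOpen_ne_fun (continuous_apply i) (continuous_apply j)

lemma exists_ball_U_sub_lt (m : Fin N → ℝ) (hx : ¬ collision x) {ε : ℝ} (hε : 0 < ε) :
    ∃ δ > 0, ∀ y, ‖y - x‖ < δ → ¬ collision y ∧ |U m y - U m x| < ε := by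
  have hev := (isOpen_setOf_not_collision.eventually_mem hx).and
    ((continuousAt_U m hx).eventually (Metric.ball_mem_nhds _ hε))
  simpa only [Metric.mem_ball, mem_ofPred_eq, dist_eq_norm, Real.norm_eq_abs]
    using Metric.eventually_nhds_iff.1 hev

/-- The convexity bound for `u ↦ 1 / ‖u‖`. With the conventions `0⁻¹ = 0` and `r / 0 = 0` it also
holds when `u` or `u + r` vanishes. -/
lemma inv_norm_sub_div_le_inv_norm_add {E : Type*} [SeminormedAddCommGroup E] (u r : E) :
    ‖u‖⁻¹ - ‖r‖ / ‖u‖ ^ 2 ≤ ‖u + r‖⁻¹ := by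
  rcases (norm_nonneg u).eq_or_lt with hu | hu
  · simp [← hu]
  have hfactor : ‖u‖⁻¹ - ‖r‖ / ‖u‖ ^ 2 = (‖u‖ - ‖r‖) / ‖u‖ ^ 2 := by field_simp
  rcases le_or_gt ‖u‖ ‖r‖ with hur | hur
  · rw [hfactor]
    exact (div_nonpos_of_nonpos_of_nonneg (sub_nonpos.2 hur) (sq_nonneg _)).trans (by positivity)
  have htri : ‖u‖ ≤ ‖u + r‖ + ‖r‖ := by simpa using norm_sub_le (u + r) r
  have hpos : 0 < ‖u + r‖ := by linarith
  refine le_trans ?_ (inv_anti₀ hpos (norm_add_le u r))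
  rw [hfactor, ← one_div, div_le_div_iff₀ (by positivity) (by positivity)]
  nlinarith [sq_nonneg ‖r‖]

/-- The sum `∑_{i<j} mᵢmⱼ / |rᵢ - rⱼ|²`, which controls the decrease of `U` under displacements. -/
def inverseSquareSum (m : Fin N → ℝ) (x : Conf d N) : ℝ :=
  ∑ i : Fin N, ∑ j : Fin N, if i < j then m i * m j / ‖x i - x j‖ ^ 2 else 0

lemma inverseSquareSum_nonneg (hm : ∀ i, 0 < m i) (x : Conf d N) : 0 ≤ inverseSquareSum m x := by
  refine Finset.sum_nonneg fun i _ => Finset.sum_nonneg fun j _ => ?_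
  have := hm i
  have := hm j
  split_ifs <;> positivity

lemma inverseSquareSum_smul (m : Fin N → ℝ) (x : Conf d N) (t : ℝ) :
    inverseSquareSum m (t • x) = inverseSquareSum m x / t ^ 2 := by
  simp only [inverseSquareSum, Finset.sum_div, ite_div, zero_div, Pi.smul_apply, ← smul_sub,
    norm_smul, mul_pow, Real.norm_eq_abs, sq_abs, div_div, mul_comm (t ^ 2)]

lemma U_sub_U_add_le (hm : ∀ i, 0 < m i) (x z : Conf d N) :
    U m x - U m (x + z) ≤ 2 * ‖z‖ * inverseSquareSum m x := by
  simp only [U, inverseSquareSum, ← Finset.sum_sub_distrib, Finset.mul_sum]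
  refine Finset.sum_le_sum fun i _ => Finset.sum_le_sum fun j _ => ?_
  split_ifs
  swap
  · simp
  have hz : ‖z i - z j‖ ≤ 2 * ‖z‖ := by
    linarith [norm_sub_le (z i) (z j), norm_le_pi_norm z i, norm_le_pi_norm z j]
  have hpair := inv_norm_sub_div_le_inv_norm_add (x i - x j) (z i - z j)
  have hmm : 0 ≤ m i * m j := (mul_pos (hm i) (hm j)).le
  calc m i * m j / ‖x i - x j‖ - m i * m j / ‖(x + z) i - (x + z) j‖
      = m i * m j * (‖x i - x j‖⁻¹ - ‖x i - x j + (z i - z j)‖⁻¹) := by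
        rw [Pi.add_apply, Pi.add_apply, add_sub_add_comm]; ring
    _ ≤ m i * m j * (‖z i - z j‖ / ‖x i - x j‖ ^ 2) := by gcongr; linarith
    _ ≤ m i * m j * (2 * ‖z‖ / ‖x i - x j‖ ^ 2) := by gcongr
    _ = 2 * ‖z‖ * (m i * m j / ‖x i - x j‖ ^ 2) := by ring

/-! ### Curves of finite kinetic energy -/

section Curves

variable {t₀ t : ℝ} {φ φ' : ℝ → Conf d N}

@[simp]
lemma timeSet_top (t₀ : ℝ) : timeSet t₀ ⊤ = Ioi t₀ := by
  ext t
  simp [timeSet]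

lemma Dnorm_top_sq (m : Fin N → ℝ) (t₀ : ℝ) (φ' : ℝ → Conf d N) :
    Dnorm m t₀ ⊤ φ' ^ 2 = ∫ t in Ioi t₀, mnorm m (φ' t) ^ 2 := by
  rw [Dnorm, Real.sq_sqrt (integral_nonneg fun _ => sq_nonneg _), timeSet_top]

lemma inD_top_iff : InD m t₀ ⊤ φ φ' ↔
    (∀ t, t₀ ≤ t → inX m (φ t)) ∧ (∀ t, t₀ ≤ t → φ t = ∫ s in t₀..t, φ' s) ∧
      (∀ t, t₀ ≤ t → IntervalIntegrable φ' volume t₀ t) ∧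
      IntegrableOn (fun t => mnorm m (φ' t) ^ 2) (Ioi t₀) := by
  simp only [InD, EReal.coe_lt_top, forall_const, timeSet_top]
  constructor
  · rintro ⟨-, hX, hint, hloc, hsq⟩
    exact ⟨hX, fun t ht => by rw [intervalIntegral.integral_of_le ht, hint t ht],
      fun t ht => (intervalIntegrable_iff_integrableOn_Ioc_of_le ht).2 (hloc t ht), hsq⟩
  · rintro ⟨hX, hint, hloc, hsq⟩
    exact ⟨by simpa using hint t₀ le_rfl, hX,
      fun t ht => by rw [← intervalIntegral.integral_of_le ht, hint t ht],
      fun t ht => (intervalIntegrable_iff_integrableOn_Ioc_of_le ht).1 (hloc t ht), hsq⟩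

namespace InD

variable (h : InD m t₀ ⊤ φ φ')
include h

lemma inX_apply (ht : t₀ ≤ t) : inX m (φ t) := (inD_top_iff.1 h).1 t ht

lemma apply_eq_integral (ht : t₀ ≤ t) : φ t = ∫ s in t₀..t, φ' s := (inD_top_iff.1 h).2.1 t ht

lemma intervalIntegrable (ht : t₀ ≤ t) : IntervalIntegrable φ' volume t₀ t :=
  (inD_top_iff.1 h).2.2.1 t ht

lemma integrableOn_sq : IntegrableOn (fun t => mnorm m (φ' t) ^ 2) (Ioi t₀) :=
  (inD_top_iff.1 h).2.2.2

lemma intervalIntegrable_sq (ht : t₀ ≤ t) :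
    IntervalIntegrable (fun s => mnorm m (φ' s) ^ 2) volume t₀ t :=
  (intervalIntegrable_iff_integrableOn_Ioc_of_le ht).2
    (h.integrableOn_sq.mono_set Ioc_subset_Ioi_self)

lemma mnorm_sq_le_mul_integral (hm : ∀ i, 0 < m i) (ht : t₀ ≤ t) :
    mnorm m (φ t) ^ 2 ≤ (t - t₀) * ∫ s in t₀..t, mnorm m (φ' s) ^ 2 := by
  have hint := (intervalIntegrable_iff_integrableOn_Ioc_of_le ht).1 (h.intervalIntegrable ht)
  have hsq := (intervalIntegrable_iff_integrableOn_Ioc_of_le ht).1 (h.intervalIntegrable_sq ht)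
  rw [h.apply_eq_integral ht, intervalIntegral.integral_of_le ht,
    intervalIntegral.integral_of_le ht]
  simp only [mnorm_eq_norm hm] at hsq ⊢
  rw [← (massEmbed m).integral_comp_comm hint]
  have hembed := (massEmbed m).integrable_comp hint
  simpa [measureReal_restrict_apply_univ, ht] using sq_norm_integral_le
    ((memLp_two_iff_integrable_sq_norm hembed.aestronglyMeasurable).2 hsq)

lemma mnorm_le_sqrt_mul_Dnorm (hm : ∀ i, 0 < m i) (ht : t₀ ≤ t) :
    mnorm m (φ t) ≤ √(t - t₀) * Dnorm m t₀ ⊤ φ' := by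
  refine abs_le_of_sq_le_sq' ?_ (by unfold Dnorm; positivity) |>.2
  rw [mul_pow, Real.sq_sqrt (sub_nonneg.2 ht), Dnorm_top_sq]
  refine (h.mnorm_sq_le_mul_integral hm ht).trans
    (mul_le_mul_of_nonneg_left ?_ (sub_nonneg.2 ht))
  rw [intervalIntegral.integral_of_le ht]
  exact setIntegral_mono_set h.integrableOn_sq (ae_of_all _ fun _ => sq_nonneg _)
    Ioc_subset_Ioi_self.eventuallyLE

end InD
end Curves

/-! ### The renormalized action -/

section Action

variable {φ φ' : ℝ → Conf d N} {t : ℝ}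

/-- The Lagrangian `½‖γ̇ - a‖² + U(γ)` of the motion `γ = hypCurve a x φ` relative to the free
motion of velocity `a`, whose derivative is `γ̇ - a = φ'`. -/
def lagrangian (m : Fin N → ℝ) (a x : Conf d N) (φ φ' : ℝ → Conf d N) (t : ℝ) : ℝ :=
  mnorm m (φ' t) ^ 2 / 2 + U m (hypCurve a x φ t)

lemma hypIntegrand_eq_lagrangian_sub (m : Fin N → ℝ) (a x : Conf d N) (φ φ' : ℝ → Conf d N)
    (ht : 0 ≤ t) : hypIntegrand m a x φ φ' t = lagrangian m a x φ φ' t - U m a * t⁻¹ := by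
  rw [hypIntegrand, lagrangian, U_smul m a ht]

lemma hypCurve_eq_smul_add (a x : Conf d N) (φ : ℝ → Conf d N) (t : ℝ) :
    hypCurve a x φ t = t • a + (φ t + (x - a)) := by
  rw [hypCurve]
  abel

/-- Curves of finite renormalized action issuing from `x`. -/
structure FiniteAction (m : Fin N → ℝ) (a x : Conf d N) (φ φ' : ℝ → Conf d N) : Prop where
  inD : InD m 1 ⊤ φ φ'
  integrable : IntegrableOn (hypIntegrand m a x φ φ') (Ioi 1)
  ae_not_collision : ∀ᵐ t ∂volume.restrict (Ioi 1), ¬ collision (hypCurve a x φ t)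

lemma hypInf_lt_iff {c : EReal} : hypInf m a x ⊤ < c ↔ ∃ φ φ', FiniteAction m a x φ φ' ∧
    ((∫ t in Ioi 1, hypIntegrand m a x φ φ' t : ℝ) : EReal) < c := by
  simp only [hypInf, iInf_lt_iff, exists_prop, hypAction, timeSet_top]
  refine exists₂_congr fun φ φ' => ⟨fun ⟨hD, hlt⟩ => ?_, fun ⟨hF, hlt⟩ => ⟨hF.inD, ?_⟩⟩
  · split_ifs at hlt with hfin
    · exact ⟨⟨hD, hfin.1, hfin.2⟩, hlt⟩
    · exact absurd hlt not_top_lt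
  · rwa [if_pos ⟨hF.integrable, hF.ae_not_collision⟩]

lemma hypInf_ne_top_iff : hypInf m a x ⊤ ≠ ⊤ ↔ ∃ φ φ', FiniteAction m a x φ φ' := by
  simp [← lt_top_iff_ne_top, hypInf_lt_iff, EReal.coe_lt_top]

lemma InD.le_hypIntegrand (hm : ∀ i, 0 < m i) {K : ℝ} (hK : 0 ≤ K)
    (hnorm : ∀ z : Conf d N, ‖z‖ ≤ K * mnorm m z) (h : InD m 1 ⊤ φ φ') (ht : 1 ≤ t) :
    mnorm m (φ' t) ^ 2 / 2 -
        2 * inverseSquareSum m a * (K * Dnorm m 1 ⊤ φ' + ‖x - a‖) * t ^ (-3 / 2 : ℝ) ≤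
      hypIntegrand m a x φ φ' t := by
  have ht₀ : 0 < t := one_pos.trans_le ht
  have hS := inverseSquareSum_nonneg hm a
  have hgrowth : ‖φ t + (x - a)‖ ≤ (K * Dnorm m 1 ⊤ φ' + ‖x - a‖) * √t := by
    have hφ : mnorm m (φ t) ≤ √t * Dnorm m 1 ⊤ φ' :=
      (h.mnorm_le_sqrt_mul_Dnorm hm ht).trans (by
        gcongr
        · exact Real.sqrt_nonneg _
        · linarith)
    calc ‖φ t + (x - a)‖ ≤ K * (√t * Dnorm m 1 ⊤ φ') + √t * ‖x - a‖ := by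
          refine (norm_add_le _ _).trans (add_le_add ((hnorm _).trans (by gcongr)) ?_)
          exact le_mul_of_one_le_left (norm_nonneg _) (Real.one_le_sqrt.2 ht)
      _ = (K * Dnorm m 1 ⊤ φ' + ‖x - a‖) * √t := by ring
  have hpow : √t / t ^ 2 = t ^ (-3 / 2 : ℝ) := by
    rw [Real.sqrt_eq_rpow, ← Real.rpow_natCast, ← Real.rpow_sub ht₀]
    norm_num
  have hU : U m (t • a) - U m (hypCurve a x φ t) ≤
      2 * inverseSquareSum m a * (K * Dnorm m 1 ⊤ φ' + ‖x - a‖) * t ^ (-3 / 2 : ℝ) := by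
    rw [hypCurve_eq_smul_add]
    calc U m (t • a) - U m (t • a + (φ t + (x - a)))
        ≤ 2 * ‖φ t + (x - a)‖ * (inverseSquareSum m a / t ^ 2) := by
          rw [← inverseSquareSum_smul]
          exact U_sub_U_add_le hm _ _
      _ ≤ 2 * ((K * Dnorm m 1 ⊤ φ' + ‖x - a‖) * √t) * (inverseSquareSum m a / t ^ 2) := by
          gcongr
      _ = 2 * inverseSquareSum m a * (K * Dnorm m 1 ⊤ φ' + ‖x - a‖) * t ^ (-3 / 2 : ℝ) := by
          rw [← hpow]
          ring
  rw [hypIntegrand]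
  linarith

lemma exists_Dnorm_sq_le_integral (hm : ∀ i, 0 < m i) (a x : Conf d N) :
    ∃ C : ℝ, ∀ φ φ', InD m 1 ⊤ φ φ' → IntegrableOn (hypIntegrand m a x φ φ') (Ioi 1) →
      Dnorm m 1 ⊤ φ' ^ 2 / 4 - C ≤ ∫ t in Ioi 1, hypIntegrand m a x φ φ' t := by
  obtain ⟨K, hK, hnorm⟩ := exists_norm_le_mul_mnorm (d := d) hm
  set S := inverseSquareSum m a
  refine ⟨(4 * S * K) ^ 2 + 4 * S * ‖x - a‖, fun φ φ' hD hint => ?_⟩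
  set D := Dnorm m 1 ⊤ φ'
  have hkin : IntegrableOn (fun t => mnorm m (φ' t) ^ 2 / 2) (Ioi 1) :=
    hD.integrableOn_sq.div_const 2
  have hdecay : IntegrableOn (fun t : ℝ => 2 * S * (K * D + ‖x - a‖) * t ^ (-3 / 2 : ℝ)) (Ioi 1) :=
    (integrableOn_Ioi_rpow_of_lt (by norm_num) one_pos).const_mul _
  have hle := setIntegral_mono_on (hkin.sub hdecay) hint measurableSet_Ioi
    fun t ht => hD.le_hypIntegrand (a := a) (x := x) hm hK.le hnorm (le_of_lt ht)
  rw [integral_sub' hkin hdecay, integral_div, ← Dnorm_top_sq, integral_const_mul,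
    integral_Ioi_rpow_of_lt (by norm_num) one_pos, Real.one_rpow] at hle
  norm_num at hle
  nlinarith [sq_nonneg (D / 2 - 4 * S * K)]

lemma hypInf_ne_bot (hm : ∀ i, 0 < m i) (a x : Conf d N) : hypInf m a x ⊤ ≠ ⊥ := by
  obtain ⟨C, hC⟩ := exists_Dnorm_sq_le_integral hm a x
  have hbound : ((-C : ℝ) : EReal) ≤ hypInf m a x ⊤ := by
    refine le_of_not_gt fun hlt => ?_
    obtain ⟨φ, φ', hF, hlt⟩ := hypInf_lt_iff.1 hlt
    have := hC φ φ' hF.inD hF.integrable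
    linarith [EReal.coe_lt_coe_iff.1 hlt, sq_nonneg (Dnorm m 1 ⊤ φ')]
  exact ((EReal.bot_lt_coe _).trans_le hbound).ne'

lemma FiniteAction.toReal_hypInf_le (hm : ∀ i, 0 < m i) (h : FiniteAction m a x φ φ') :
    (hypInf m a x ⊤).toReal ≤ ∫ t in Ioi 1, hypIntegrand m a x φ φ' t := by
  refine EReal.coe_le_coe_iff.1 (le_of_not_gt fun hlt => ?_)
  rw [EReal.coe_toReal (hypInf_ne_top_iff.2 ⟨φ, φ', h⟩) (hypInf_ne_bot hm a x)] at hlt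
  exact lt_irrefl _ (hypInf_lt_iff.2 ⟨φ, φ', h, hlt⟩)

lemma exists_finiteAction_lt (hm : ∀ i, 0 < m i) (h : hypInf m a x ⊤ ≠ ⊤) {c : ℝ}
    (hc : (hypInf m a x ⊤).toReal < c) :
    ∃ φ φ', FiniteAction m a x φ φ' ∧ ∫ t in Ioi 1, hypIntegrand m a x φ φ' t < c := by
  rw [← EReal.coe_lt_coe_iff, EReal.coe_toReal h (hypInf_ne_bot hm a x), hypInf_lt_iff] at hc
  simpa only [EReal.coe_lt_coe_iff] using hc

end Action

/-! ### Cutting and concatenating motions -/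

section Continuation

variable {τ : ℝ} {Φ Φ' φ φ' : ℝ → Conf d N}

/-- After time `1 + τ`, the motion `hypCurve a x Φ` is the motion `hypCurve a y φ` delayed
by `τ`. -/
structure IsContinuation (a x y : Conf d N) (τ : ℝ) (Φ Φ' φ φ' : ℝ → Conf d N) : Prop where
  hypCurve_add : ∀ s, 1 < s → hypCurve a x Φ (s + τ) = hypCurve a y φ s
  deriv_add : ∀ s, 1 < s → Φ' (s + τ) = φ' s

namespace IsContinuation

variable (h : IsContinuation a x y τ Φ Φ' φ φ') (hτ : 0 ≤ τ)
include h

lemma ae_not_collision_iff :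
    (∀ᵐ t ∂volume.restrict (Ioi (1 + τ)), ¬ collision (hypCurve a x Φ t)) ↔
      ∀ᵐ s ∂volume.restrict (Ioi 1), ¬ collision (hypCurve a y φ s) := by
  rw [ae_restrict_Ioi_add_iff]
  refine eventually_congr ?_
  filter_upwards [ae_restrict_mem measurableSet_Ioi] with s hs
  rw [h.hypCurve_add s hs]

include hτ

lemma hypIntegrand_add (m : Fin N → ℝ) {s : ℝ} (hs : 1 < s) :
    hypIntegrand m a x Φ Φ' (s + τ) =
      hypIntegrand m a y φ φ' s + U m a * (s⁻¹ - (s + τ)⁻¹) := by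
  rw [hypIntegrand_eq_lagrangian_sub _ _ _ _ _ (by linarith),
    hypIntegrand_eq_lagrangian_sub _ _ _ _ _ (by linarith), lagrangian, lagrangian,
    h.hypCurve_add s hs, h.deriv_add s hs]
  ring

lemma integrableOn_hypIntegrand_iff :
    IntegrableOn (hypIntegrand m a x Φ Φ') (Ioi (1 + τ)) ↔
      IntegrableOn (hypIntegrand m a y φ φ') (Ioi 1) := by
  rw [← integrableOn_comp_add_right_Ioi_iff,
    integrableOn_congr_fun (fun s (hs : s ∈ Ioi 1) => h.hypIntegrand_add hτ m hs)
      measurableSet_Ioi]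
  exact integrable_add_iff_integrable_left ((integrableOn_inv_sub_inv_add one_pos hτ).const_mul _)

lemma integral_Ioi_add (hint : IntegrableOn (hypIntegrand m a y φ φ') (Ioi 1)) :
    ∫ t in Ioi (1 + τ), hypIntegrand m a x Φ Φ' t =
      (∫ s in Ioi 1, hypIntegrand m a y φ φ' s) + ∫ t in 1..1 + τ, U m a * t⁻¹ := by
  rw [← integral_comp_add_right_Ioi,
    setIntegral_congr_fun measurableSet_Ioi fun s hs => h.hypIntegrand_add hτ m hs,
    integral_add hint ((integrableOn_inv_sub_inv_add one_pos hτ).const_mul _),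
    integral_const_mul, integral_inv_sub_inv_add one_pos hτ, intervalIntegral.integral_const_mul]

lemma integral_eq (hint : IntegrableOn (hypIntegrand m a x Φ Φ') (Ioi 1)) :
    ∫ t in Ioi 1, hypIntegrand m a x Φ Φ' t =
      (∫ t in 1..1 + τ, lagrangian m a x Φ Φ' t) + ∫ t in Ioi 1, hypIntegrand m a y φ φ' t := by
  have hle : (1 : ℝ) ≤ 1 + τ := le_add_of_nonneg_right hτ
  have hhead : IntervalIntegrable (hypIntegrand m a x Φ Φ') volume 1 (1 + τ) :=
    (intervalIntegrable_iff_integrableOn_Ioc_of_le hle).2 (hint.mono_set Ioc_subset_Ioi_self)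
  have htail := hint.mono_set (Ioi_subset_Ioi hle)
  have hinv := intervalIntegrable_const_mul_inv (U m a) one_pos (one_pos.trans_le hle)
  have hlagrangian : ∫ t in 1..1 + τ, lagrangian m a x Φ Φ' t =
      (∫ t in 1..1 + τ, hypIntegrand m a x Φ Φ' t) + ∫ t in 1..1 + τ, U m a * t⁻¹ := by
    rw [← intervalIntegral.integral_add hhead hinv]
    refine intervalIntegral.integral_congr fun t ht => ?_
    rw [uIcc_of_le hle] at ht
    simp only [hypIntegrand_eq_lagrangian_sub m a x Φ Φ' (zero_le_one.trans ht.1),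
      sub_add_cancel]
  rw [← intervalIntegral.integral_interval_add_Ioi hint htail,
    h.integral_Ioi_add hτ ((h.integrableOn_hypIntegrand_iff hτ).1 htail), hlagrangian]
  ring

end IsContinuation

lemma InD.tail {t₀ : ℝ} (h : InD m t₀ ⊤ φ φ') (hτ : 0 ≤ τ) :
    InD m t₀ ⊤ (fun s => φ (s + τ) - φ (t₀ + τ)) (fun s => φ' (s + τ)) := by
  have hmem {s : ℝ} (hs : t₀ ≤ s) : t₀ ≤ s + τ := hs.trans (le_add_of_nonneg_right hτ)
  refine inD_top_iff.2 ⟨fun s hs => ?_, fun s hs => ?_, fun s hs => ?_, ?_⟩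
  · exact (h.inX_apply (hmem hs)).sub (h.inX_apply (hmem le_rfl))
  · rw [intervalIntegral.integral_comp_add_right, h.apply_eq_integral (hmem hs),
      h.apply_eq_integral (hmem le_rfl)]
    exact intervalIntegral.integral_interval_sub_left (h.intervalIntegrable (hmem hs))
      (h.intervalIntegrable (hmem le_rfl))
  · have := (h.intervalIntegrable (hmem le_rfl)).symm.trans (h.intervalIntegrable (hmem hs))
    simpa using this.comp_add_right τ
  · exact integrableOn_comp_add_right_Ioi_iff.2
      (h.integrableOn_sq.mono_set (Ioi_subset_Ioi (hmem le_rfl)))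

lemma isContinuation_tail (a x : Conf d N) (τ : ℝ) (φ φ' : ℝ → Conf d N) :
    IsContinuation a x (hypCurve a x φ (1 + τ)) τ φ φ'
      (fun s => φ (s + τ) - φ (1 + τ)) (fun s => φ' (s + τ)) where
  hypCurve_add s _ := by
    simp only [hypCurve]
    module
  deriv_add _ _ := rfl

lemma FiniteAction.tail (h : FiniteAction m a x φ φ') (hτ : 0 ≤ τ) :
    FiniteAction m a (hypCurve a x φ (1 + τ))
      (fun s => φ (s + τ) - φ (1 + τ)) (fun s => φ' (s + τ)) where
  inD := h.inD.tail hτ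
  integrable := ((isContinuation_tail a x τ φ φ').integrableOn_hypIntegrand_iff hτ).1
    (h.integrable.mono_set (Ioi_subset_Ioi (le_add_of_nonneg_right hτ)))
  ae_not_collision := (isContinuation_tail a x τ φ φ').ae_not_collision_iff.1
    (ae_restrict_of_ae_restrict_of_subset (Ioi_subset_Ioi (le_add_of_nonneg_right hτ))
      h.ae_not_collision)

lemma FiniteAction.integral_lagrangian_add_toReal_hypInf_le (hm : ∀ i, 0 < m i)
    (h : FiniteAction m a x φ φ') (hτ : 0 ≤ τ) :
    (∫ t in 1..1 + τ, lagrangian m a x φ φ' t) + (hypInf m a (hypCurve a x φ (1 + τ)) ⊤).toReal ≤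
      ∫ t in Ioi 1, hypIntegrand m a x φ φ' t := by
  rw [(isContinuation_tail a x τ φ φ').integral_eq hτ h.integrable]
  gcongr
  exact (h.tail hτ).toReal_hypInf_le hm

lemma InD.congr {t₀ : ℝ} (h : InD m t₀ ⊤ φ φ') (hφ : ∀ t, t₀ ≤ t → Φ t = φ t)
    (hφ' : ∀ t, t₀ < t → Φ' t = φ' t) : InD m t₀ ⊤ Φ Φ' := by
  refine inD_top_iff.2 ⟨fun t ht => ?_, fun t ht => ?_, fun t ht => ?_, ?_⟩
  · rw [hφ t ht]
    exact h.inX_apply ht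
  · rw [hφ t ht, h.apply_eq_integral ht]
    refine intervalIntegral.integral_congr_ae (ae_of_all _ fun s hs => ?_)
    rw [uIoc_of_le ht] at hs
    exact (hφ' s hs.1).symm
  · refine (h.intervalIntegrable ht).congr fun s hs => ?_
    rw [uIoc_of_le ht] at hs
    exact (hφ' s hs.1).symm
  · refine h.integrableOn_sq.congr_fun (fun s hs => ?_) measurableSet_Ioi
    simp only [hφ' s hs]

lemma InD.of_tail {t₀ : ℝ} (hτ : 0 ≤ τ) (hX : ∀ t ∈ Icc t₀ (t₀ + τ), inX m (φ t))
    (hφ : ∀ t ∈ Icc t₀ (t₀ + τ), φ t = ∫ s in t₀..t, φ' s)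
    (hint : IntervalIntegrable φ' volume t₀ (t₀ + τ))
    (hsq : IntervalIntegrable (fun t => mnorm m (φ' t) ^ 2) volume t₀ (t₀ + τ))
    (htail : InD m t₀ ⊤ (fun s => φ (s + τ) - φ (t₀ + τ)) (fun s => φ' (s + τ))) :
    InD m t₀ ⊤ φ φ' := by
  have hle : t₀ ≤ t₀ + τ := le_add_of_nonneg_right hτ
  have htail_int {t : ℝ} (ht : t₀ + τ ≤ t) : IntervalIntegrable φ' volume (t₀ + τ) t := by
    simpa using (htail.intervalIntegrable (le_sub_iff_add_le.2 ht)).comp_sub_right τ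
  have htail_apply {t : ℝ} (ht : t₀ + τ ≤ t) : φ t = φ (t₀ + τ) + ∫ s in t₀ + τ..t, φ' s := by
    have := htail.apply_eq_integral (le_sub_iff_add_le.2 ht)
    rw [intervalIntegral.integral_comp_add_right, sub_add_cancel] at this
    rw [← this, add_sub_cancel]
  refine inD_top_iff.2 ⟨fun t ht => ?_, fun t ht => ?_, fun t ht => ?_, ?_⟩
  · rcases le_total t (t₀ + τ) with hcase | hcase
    · exact hX t ⟨ht, hcase⟩
    · simpa using (htail.inX_apply (le_sub_iff_add_le.2 hcase)).add (hX _ ⟨hle, le_rfl⟩)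
  · rcases le_total t (t₀ + τ) with hcase | hcase
    · exact hφ t ⟨ht, hcase⟩
    · rw [htail_apply hcase, hφ _ ⟨hle, le_rfl⟩]
      exact intervalIntegral.integral_add_adjacent_intervals hint (htail_int hcase)
  · rcases le_total t (t₀ + τ) with hcase | hcase
    · exact hint.mono_set (by simpa only [uIcc_of_le, ht, hle] using Icc_subset_Icc_right hcase)
    · exact hint.trans (htail_int hcase)
  · rw [← Ioc_union_Ioi_eq_Ioi hle]
    exact ((intervalIntegrable_iff_integrableOn_Ioc_of_le hle).1 hsq).union
      (integrableOn_comp_add_right_Ioi_iff.1 htail.integrableOn_sq)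

/-- An arc `γ` in `X` over the time interval `[0, τ]`, given together with its derivative `γ'`,
whose Newtonian action `∫ (½‖γ'‖² + U(γ))` is finite. Collisions are allowed on a null set
of times. -/
structure FiniteArc (m : Fin N → ℝ) (τ : ℝ) (γ γ' : ℝ → Conf d N) : Prop where
  inX_apply : ∀ s ∈ Icc 0 τ, inX m (γ s)
  sub_eq_integral : ∀ s ∈ Icc 0 τ, γ s - γ 0 = ∫ r in 0..s, γ' r
  intervalIntegrable : IntervalIntegrable γ' volume 0 τ
  intervalIntegrable_sq : IntervalIntegrable (fun s => mnorm m (γ' s) ^ 2) volume 0 τ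
  intervalIntegrable_U : IntervalIntegrable (fun s => U m (γ s)) volume 0 τ
  ae_not_collision : ∀ᵐ s ∂volume.restrict (Ioc 0 τ), ¬ collision (γ s)

/-- The concatenation of an arc `γ` over `[0, τ]` with the motion `hypCurve a (γ τ) φ`, in the
coordinates of `InD`: the motion `hypCurve a (γ 0) (prepend a τ γ φ)` at time `t` is `γ (t - 1)`
for `t ≤ 1 + τ` and continues as `hypCurve a (γ τ) φ`. -/
def prepend (a : Conf d N) (τ : ℝ) (γ φ : ℝ → Conf d N) (t : ℝ) : Conf d N :=
  if t ≤ 1 + τ then γ (t - 1) - γ 0 - (t - 1) • a else γ τ - γ 0 - τ • a + φ (t - τ)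

/-- The derivative of `prepend`. -/
def prependDeriv (a : Conf d N) (τ : ℝ) (γ' φ' : ℝ → Conf d N) (t : ℝ) : Conf d N :=
  if t ≤ 1 + τ then γ' (t - 1) - a else φ' (t - τ)

section Prepend

variable {s t : ℝ} {γ γ' : ℝ → Conf d N}

lemma prepend_of_le (ht : t ≤ 1 + τ) : prepend a τ γ φ t = γ (t - 1) - γ 0 - (t - 1) • a :=
  if_pos ht

lemma prependDeriv_of_le (ht : t ≤ 1 + τ) : prependDeriv a τ γ' φ' t = γ' (t - 1) - a := if_pos ht

lemma prepend_add (hs : 1 < s) : prepend a τ γ φ (s + τ) = γ τ - γ 0 - τ • a + φ s := by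
  rw [prepend, if_neg (by linarith), add_sub_cancel_right]

lemma prependDeriv_add (hs : 1 < s) : prependDeriv a τ γ' φ' (s + τ) = φ' s := by
  rw [prependDeriv, if_neg (by linarith), add_sub_cancel_right]

lemma isContinuation_prepend (a : Conf d N) (τ : ℝ) (γ γ' φ φ' : ℝ → Conf d N) :
    IsContinuation a (γ 0) (γ τ) τ (prepend a τ γ φ) (prependDeriv a τ γ' φ') φ φ' where
  hypCurve_add s hs := by
    rw [hypCurve, hypCurve, prepend_add hs]
    module
  deriv_add s hs := prependDeriv_add hs

lemma hypCurve_prepend_of_le (ht : t ≤ 1 + τ) :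
    hypCurve a (γ 0) (prepend a τ γ φ) t = γ (t - 1) := by
  rw [hypCurve, prepend_of_le ht]
  module

lemma lagrangian_prepend_of_le (ht : t ≤ 1 + τ) :
    lagrangian m a (γ 0) (prepend a τ γ φ) (prependDeriv a τ γ' φ') t =
      mnorm m (γ' (t - 1) - a) ^ 2 / 2 + U m (γ (t - 1)) := by
  rw [lagrangian, prependDeriv_of_le ht, hypCurve_prepend_of_le ht]

lemma integral_lagrangian_prepend (m : Fin N → ℝ) (a : Conf d N) (φ φ' : ℝ → Conf d N)
    (hτ : 0 ≤ τ) :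
    ∫ t in 1..1 + τ, lagrangian m a (γ 0) (prepend a τ γ φ) (prependDeriv a τ γ' φ') t =
      ∫ s in 0..τ, (mnorm m (γ' s - a) ^ 2 / 2 + U m (γ s)) := by
  have hle : (1 : ℝ) ≤ 1 + τ := le_add_of_nonneg_right hτ
  have hshift := intervalIntegral.integral_comp_sub_right (a := 1) (b := 1 + τ)
    (fun s => mnorm m (γ' s - a) ^ 2 / 2 + U m (γ s)) 1
  rw [sub_self, add_sub_cancel_left] at hshift
  rw [← hshift]
  refine intervalIntegral.integral_congr fun t ht => ?_
  rw [uIcc_of_le hle] at ht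
  exact lagrangian_prepend_of_le ht.2

namespace FiniteArc

variable (hm : ∀ i, 0 < m i) (h : FiniteArc m τ γ γ')
include hm h

lemma intervalIntegrable_sq_sub (a : Conf d N) :
    IntervalIntegrable (fun s => mnorm m (γ' s - a) ^ 2) volume 0 τ := by
  simp only [mnorm_sub_sq hm]
  refine (h.intervalIntegrable_sq.sub (.const_mul ?_ 2)).add intervalIntegrable_const
  simp only [minner_eq_inner hm]
  have hembed : IntervalIntegrable (fun s => massEmbed m (γ' s)) volume 0 τ :=
    ⟨(massEmbed m).integrable_comp h.intervalIntegrable.1,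
      (massEmbed m).integrable_comp h.intervalIntegrable.2⟩
  exact ⟨hembed.1.const_inner _, hembed.2.const_inner _⟩

lemma intervalIntegrable_lagrangian_prepend (a : Conf d N) (φ φ' : ℝ → Conf d N) (hτ : 0 ≤ τ) :
    IntervalIntegrable (lagrangian m a (γ 0) (prepend a τ γ φ) (prependDeriv a τ γ' φ')) volume
      1 (1 + τ) := by
  have hshift := (((h.intervalIntegrable_sq_sub hm a).div_const 2).add
    h.intervalIntegrable_U).comp_sub_right 1
  rw [zero_add, add_comm τ] at hshift
  refine hshift.congr fun t ht => ?_
  rw [uIoc_of_le (le_add_of_nonneg_right hτ)] at ht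
  exact (lagrangian_prepend_of_le ht.2).symm

lemma inD_prepend (ha : inX m a) (hτ : 0 ≤ τ) (hφ : InD m 1 ⊤ φ φ') :
    InD m 1 ⊤ (prepend a τ γ φ) (prependDeriv a τ γ' φ') := by
  have hle : (1 : ℝ) ≤ 1 + τ := le_add_of_nonneg_right hτ
  have hmem {t : ℝ} (ht : t ∈ Icc 1 (1 + τ)) : t - 1 ∈ Icc 0 τ :=
    ⟨sub_nonneg.2 ht.1, sub_le_iff_le_add'.2 ht.2⟩
  have hderiv {t : ℝ} (ht : t ∈ Icc 1 (1 + τ)) :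
      EqOn (fun r => γ' (r - 1) - a) (prependDeriv a τ γ' φ') (uIoc 1 t) := fun r hr => by
    rw [uIoc_of_le ht.1] at hr
    exact (prependDeriv_of_le (hr.2.trans ht.2)).symm
  have hint := (h.intervalIntegrable.sub (intervalIntegrable_const (c := a))).comp_sub_right 1
  have hsq := (h.intervalIntegrable_sq_sub hm a).comp_sub_right 1
  rw [zero_add, add_comm τ] at hint hsq
  refine .of_tail hτ (fun t ht => ?_) (fun t ht => ?_) (hint.congr (hderiv ⟨hle, le_rfl⟩))
    (hsq.congr fun t ht => by simp only [← hderiv ⟨hle, le_rfl⟩ ht])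
    (hφ.congr (fun s hs => ?_) fun s hs => prependDeriv_add hs)
  · rw [prepend_of_le ht.2]
    exact ((h.inX_apply _ (hmem ht)).sub (h.inX_apply 0 ⟨le_rfl, hτ⟩)).sub (ha.smul _)
  · rw [prepend_of_le ht.2, ← intervalIntegral.integral_congr_ae
      (ae_of_all _ fun r hr => hderiv ht hr),
      intervalIntegral.integral_comp_sub_right (fun r => γ' r - a), sub_self,
      intervalIntegral.integral_sub _ intervalIntegrable_const, ← h.sub_eq_integral _ (hmem ht),
      intervalIntegral.integral_const, sub_zero]
    refine h.intervalIntegrable.mono_set ?_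
    rw [uIcc_of_le (hmem ht).1, uIcc_of_le hτ]
    exact Icc_subset_Icc_right (hmem ht).2
  · rcases hs.eq_or_lt with rfl | hs
    · rw [sub_self, hφ.1]
    · rw [prepend_add hs, prepend_of_le le_rfl, add_sub_cancel_left, add_sub_cancel_left]

lemma finiteAction_prepend (ha : inX m a) (hτ : 0 ≤ τ) (hφ : FiniteAction m a (γ τ) φ φ') :
    FiniteAction m a (γ 0) (prepend a τ γ φ) (prependDeriv a τ γ' φ') where
  inD := h.inD_prepend hm ha hτ hφ.inD
  integrable := by
    have hle : (1 : ℝ) ≤ 1 + τ := le_add_of_nonneg_right hτ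
    rw [← Ioc_union_Ioi_eq_Ioi hle]
    refine IntegrableOn.union ?_
      (((isContinuation_prepend a τ γ γ' φ φ').integrableOn_hypIntegrand_iff hτ).2 hφ.integrable)
    refine ((intervalIntegrable_iff_integrableOn_Ioc_of_le hle).1
      ((h.intervalIntegrable_lagrangian_prepend hm a φ φ' hτ).sub
        (intervalIntegrable_const_mul_inv (U m a) one_pos (one_pos.trans_le hle)))).congr_fun
      (fun t ht => ?_) measurableSet_Ioc
    exact (hypIntegrand_eq_lagrangian_sub _ _ _ _ _ (zero_le_one.trans ht.1.le)).symm
  ae_not_collision := by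
    rw [← Ioc_union_Ioi_eq_Ioi (le_add_of_nonneg_right hτ), ae_restrict_union_iff]
    refine ⟨?_, (isContinuation_prepend a τ γ γ' φ φ').ae_not_collision_iff.2
      hφ.ae_not_collision⟩
    have hshift := (measurePreserving_sub_right volume (1 : ℝ)).restrict_preimage
      (measurableSet_Ioc (a := (0 : ℝ)) (b := τ))
    rw [preimage_sub_const_Ioc, zero_add, add_comm τ] at hshift
    filter_upwards [hshift.quasiMeasurePreserving.ae h.ae_not_collision,
      ae_restrict_mem measurableSet_Ioc] with t ht htmem
    rwa [hypCurve_prepend_of_le htmem.2]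

lemma hypInf_ne_top (ha : inX m a) (hτ : 0 ≤ τ) (hfin : hypInf m a (γ τ) ⊤ ≠ ⊤) :
    hypInf m a (γ 0) ⊤ ≠ ⊤ := by
  obtain ⟨φ, φ', hφ⟩ := hypInf_ne_top_iff.1 hfin
  exact hypInf_ne_top_iff.2 ⟨_, _, h.finiteAction_prepend hm ha hτ hφ⟩

lemma toReal_hypInf_le (ha : inX m a) (hτ : 0 ≤ τ) (hfin : hypInf m a (γ τ) ⊤ ≠ ⊤) :
    (hypInf m a (γ 0) ⊤).toReal ≤
      (∫ s in 0..τ, (mnorm m (γ' s - a) ^ 2 / 2 + U m (γ s))) + (hypInf m a (γ τ) ⊤).toReal := by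
  refine le_of_forall_pos_lt_add fun ε hε => ?_
  obtain ⟨φ, φ', hφ, hlt⟩ := exists_finiteAction_lt hm hfin (lt_add_of_pos_right _ hε)
  have hψ := h.finiteAction_prepend hm ha hτ hφ
  calc (hypInf m a (γ 0) ⊤).toReal
      ≤ _ := hψ.toReal_hypInf_le hm
    _ = (∫ s in 0..τ, (mnorm m (γ' s - a) ^ 2 / 2 + U m (γ s))) + _ := by
        rw [(isContinuation_prepend a τ γ γ' φ φ').integral_eq hτ hψ.integrable,
          integral_lagrangian_prepend m a φ φ' hτ]
    _ < (∫ s in 0..τ, (mnorm m (γ' s - a) ^ 2 / 2 + U m (γ s))) +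
        ((hypInf m a (γ τ) ⊤).toReal + ε) := by gcongr
    _ = _ := by ring

end FiniteArc
end Prepend
end Continuation

/-! ### Finiteness of the renormalized action -/

section Finiteness

variable {τ : ℝ} {γ γ' : ℝ → Conf d N}

lemma FiniteArc.reverse (h : FiniteArc m τ γ γ') (hτ : 0 ≤ τ) :
    FiniteArc m τ (fun s => γ (τ - s)) (fun s => -γ' (τ - s)) where
  inX_apply s hs := h.inX_apply _ ⟨sub_nonneg.2 hs.2, sub_le_self τ hs.1⟩
  sub_eq_integral s hs := by
    have hmem : τ - s ∈ Icc 0 τ := ⟨sub_nonneg.2 hs.2, sub_le_self τ hs.1⟩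
    have hsub : IntervalIntegrable γ' volume 0 (τ - s) := h.intervalIntegrable.mono_set (by
      simpa only [uIcc_of_le, hτ, hmem.1] using Icc_subset_Icc_right hmem.2)
    rw [intervalIntegral.integral_neg, intervalIntegral.integral_comp_sub_left, sub_zero,
      ← intervalIntegral.integral_interval_sub_left h.intervalIntegrable hsub,
      ← h.sub_eq_integral _ hmem, ← h.sub_eq_integral τ ⟨hτ, le_rfl⟩]
    abel
  intervalIntegrable := by
    have := (h.intervalIntegrable.comp_sub_left τ).symm.neg
    rwa [sub_zero, sub_self] at this
  intervalIntegrable_sq := by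
    simpa only [mnorm_neg, sub_zero, sub_self] using (h.intervalIntegrable_sq.comp_sub_left τ).symm
  intervalIntegrable_U := by simpa using (h.intervalIntegrable_U.comp_sub_left τ).symm
  ae_not_collision := by
    have hflip := (Measure.measurePreserving_sub_left volume τ).restrict_preimage
      (measurableSet_Ioc (a := (0 : ℝ)) (b := τ))
    rw [preimage_const_sub_Ioc, sub_self, sub_zero] at hflip
    rw [← restrict_Ico_eq_restrict_Ioc]
    exact hflip.quasiMeasurePreserving.ae h.ae_not_collision

lemma collision_smul_iff {c : ℝ} (hc : c ≠ 0) : collision (c • x) ↔ collision x := by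
  simp [collision, hc]

lemma finiteArc_rpow_smul (hm : ∀ i, 0 < m i) (hx : inOmega m x) :
    FiniteArc m 1 (fun s => s ^ (2 / 3 : ℝ) • x) (fun s => (2 / 3 * s ^ (-1 / 3 : ℝ)) • x) where
  inX_apply s _ := hx.1.smul _
  sub_eq_integral s _ := by
    rw [intervalIntegral.integral_smul_const, intervalIntegral.integral_const_mul,
      integral_rpow (by norm_num), ← sub_smul]
    congr 1
    norm_num
    ring
  intervalIntegrable := by
    have := (intervalIntegral.intervalIntegrable_rpow' (a := 0) (b := 1)
      (by norm_num : (-1 : ℝ) < -1 / 3)).const_mul (2 / 3)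
    exact ⟨this.1.smul_const x, this.2.smul_const x⟩
  intervalIntegrable_sq := by
    refine ((intervalIntegral.intervalIntegrable_rpow' (a := 0) (b := 1)
      (by norm_num : (-1 : ℝ) < -2 / 3)).const_mul ((2 / 3 * mnorm m x) ^ 2)).congr
      fun s hs => ?_
    rw [uIoc_of_le zero_le_one] at hs
    simp only [mnorm_smul hm, mul_pow, sq_abs, ← Real.rpow_mul_natCast hs.1.le]
    norm_num
    ring
  intervalIntegrable_U := by
    refine ((intervalIntegral.intervalIntegrable_rpow' (a := 0) (b := 1)
      (by norm_num : (-1 : ℝ) < -2 / 3)).const_mul (U m x)).congr fun s hs => ?_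
    rw [uIoc_of_le zero_le_one] at hs
    simp only [U_smul m x (Real.rpow_nonneg hs.1.le _), ← Real.rpow_neg hs.1.le, neg_div]
  ae_not_collision := by
    filter_upwards [ae_restrict_mem measurableSet_Ioc] with s hs
    exact (collision_smul_iff (Real.rpow_pos_of_pos hs.1 _).ne').not.2 hx.2

lemma finiteAction_zero (m : Fin N → ℝ) (ha : ¬ collision a) : FiniteAction m a a 0 0 := by
  have hcurve (t : ℝ) : hypCurve a a 0 t = t • a := by simp [hypCurve]
  refine ⟨inD_top_iff.2 ⟨by simp [inX], by simp,
    fun _ _ => intervalIntegrable_const (c := 0), by simp⟩, ?_, ?_⟩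
  · have : hypIntegrand m a a 0 0 = 0 := by
      ext t
      simp [hypIntegrand, hcurve]
    rw [this]
    exact integrableOn_zero
  · filter_upwards [ae_restrict_mem measurableSet_Ioi] with t ht
    rw [hcurve]
    exact (collision_smul_iff (one_pos.trans ht).ne').not.2 ha

lemma hypInf_ne_top (hm : ∀ i, 0 < m i) (ha : inOmega m a) (hx : inOmega m x) :
    hypInf m a x ⊤ ≠ ⊤ := by
  have hfree : hypInf m a a ⊤ ≠ ⊤ := hypInf_ne_top_iff.2 ⟨0, 0, finiteAction_zero m ha.2⟩
  have hejection : hypInf m a 0 ⊤ ≠ ⊤ := by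
    simpa using (finiteArc_rpow_smul hm ha).hypInf_ne_top hm ha.1 zero_le_one (by simpa using hfree)
  simpa using ((finiteArc_rpow_smul hm hx).reverse zero_le_one).hypInf_ne_top hm ha.1 zero_le_one
    (by simpa using hejection)

end Finiteness

/-! ### Dynamic programming -/

section DynamicProgramming

variable {τ c ε δ : ℝ} {φ φ' : ℝ → Conf d N}

lemma finiteArc_segment (hx : inX m x) (hw : inX m w) (hτ : 0 ≤ τ)
    (hcol : ∀ s ∈ Icc 0 τ, ¬ collision (x + s • w)) :
    FiniteArc m τ (fun s => x + s • w) (fun _ => w) where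
  inX_apply s _ := hx.add (hw.smul s)
  sub_eq_integral s _ := by simp
  intervalIntegrable := intervalIntegrable_const
  intervalIntegrable_sq := intervalIntegrable_const
  intervalIntegrable_U := by
    refine ContinuousOn.intervalIntegrable fun s hs => ?_
    rw [uIcc_of_le hτ] at hs
    exact (ContinuousAt.comp (f := fun s : ℝ => x + s • w) (continuousAt_U m (hcol s hs))
      (by fun_prop)).continuousWithinAt
  ae_not_collision := by
    filter_upwards [ae_restrict_mem measurableSet_Ioc] with s hs
    exact hcol s (Ioc_subset_Icc_self hs)

lemma toReal_hypInf_le_add_of_segment (hm : ∀ i, 0 < m i) (ha : inOmega m a) (hx : inX m x)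
    (hw : inX m w) (hτ : 0 ≤ τ) (hcol : ∀ s ∈ Icc 0 τ, ¬ collision (x + s • w))
    (hU : ∀ s ∈ Icc 0 τ, U m (x + s • w) ≤ c) :
    (hypInf m a x ⊤).toReal ≤
      (hypInf m a (x + τ • w) ⊤).toReal + τ * (mnorm m (w - a) ^ 2 / 2 + c) := by
  have hseg := finiteArc_segment hx hw hτ hcol
  have hend : inOmega m (x + τ • w) := ⟨hx.add (hw.smul τ), hcol τ ⟨hτ, le_rfl⟩⟩
  have hle := hseg.toReal_hypInf_le hm ha.1 hτ (hypInf_ne_top hm ha hend)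
  have hpot : ∫ s in 0..τ, U m (x + s • w) ≤ τ * c := by
    simpa using intervalIntegral.integral_mono_on hτ hseg.intervalIntegrable_U
      intervalIntegrable_const hU
  rw [intervalIntegral.integral_add intervalIntegrable_const hseg.intervalIntegrable_U,
    intervalIntegral.integral_const, sub_zero, zero_smul, add_zero, smul_eq_mul] at hle
  linarith

/-- Subtracting `⟨a, ·⟩` from the infimum removes the cross term of `½‖w - a‖²`. -/
lemma hypValue_add_smul_add (hm : ∀ i, 0 < m i) (a x w : Conf d N) (τ c : ℝ) :
    hypValue m a (x + τ • w) + τ * ((mnorm m w ^ 2 + mnorm m a ^ 2) / 2 + c) =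
      (hypInf m a (x + τ • w) ⊤).toReal + τ * (mnorm m (w - a) ^ 2 / 2 + c) - minner m a x := by
  rw [hypValue, mnorm_sub_sq hm, minner_add_right, minner_smul_right]
  ring

lemma eventually_norm_smul_lt (w : Conf d N) (hδ : 0 < δ) : ∀ᶠ τ : ℝ in 𝓝[>] 0, ‖τ • w‖ < δ := by
  have hlim : Tendsto (fun τ : ℝ => ‖τ • w‖) (𝓝 0) (𝓝 0) :=
    Continuous.tendsto' (by fun_prop) _ _ (by simp)
  exact nhdsWithin_le_nhds (hlim.eventually_lt_const hδ)

lemma eventually_hypValue_le_add (hm : ∀ i, 0 < m i) (ha : inOmega m a) (hx : inOmega m x)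
    (hw : inX m w) (hε : 0 < ε) :
    ∀ᶠ τ in 𝓝[>] 0, hypValue m a x ≤
      hypValue m a (x + τ • w) + τ * ((mnorm m w ^ 2 + mnorm m a ^ 2) / 2 + (U m x + ε)) := by
  obtain ⟨δ, hδ, hball⟩ := exists_ball_U_sub_lt m hx.2 hε
  filter_upwards [eventually_norm_smul_lt w hδ, self_mem_nhdsWithin] with τ hτδ hτ
  have hseg (s : ℝ) (hs : s ∈ Icc 0 τ) :=
    hball (x + s • w) <| by
      rw [add_sub_cancel_left]
      refine lt_of_le_of_lt ?_ hτδ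
      rw [norm_smul, norm_smul, Real.norm_of_nonneg hs.1, Real.norm_of_nonneg (hs.1.trans hs.2)]
      gcongr
      exact hs.2
  rw [hypValue_add_smul_add hm, hypValue]
  gcongr
  exact toReal_hypInf_le_add_of_segment hm ha hx.1 hw (le_of_lt hτ) (fun s hs => (hseg s hs).1)
    (fun s hs => by linarith [(abs_lt.1 (hseg s hs).2).2])

lemma FiniteAction.intervalIntegrable_lagrangian (h : FiniteAction m a x φ φ') (hτ : 0 ≤ τ) :
    IntervalIntegrable (lagrangian m a x φ φ') volume 1 (1 + τ) := by
  have hle : (1 : ℝ) ≤ 1 + τ := le_add_of_nonneg_right hτ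
  have hhead : IntervalIntegrable (hypIntegrand m a x φ φ') volume 1 (1 + τ) :=
    (intervalIntegrable_iff_integrableOn_Ioc_of_le hle).2
      (h.integrable.mono_set Ioc_subset_Ioi_self)
  refine (hhead.add (intervalIntegrable_const_mul_inv (U m a) one_pos
    (one_pos.trans_le hle))).congr fun t ht => ?_
  rw [uIoc_of_le hle] at ht
  simp only [hypIntegrand_eq_lagrangian_sub m a x φ φ' (zero_le_one.trans ht.1.le), sub_add_cancel]

lemma FiniteAction.mul_le_integral_lagrangian (hm : ∀ i, 0 < m i) (h : FiniteAction m a x φ φ')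
    (hτ : 0 < τ) (hw : φ (1 + τ) = τ • (w - a))
    (hU : ∀ t ∈ Icc 1 (1 + τ), c ≤ U m (hypCurve a x φ t)) :
    τ * (mnorm m (w - a) ^ 2 / 2 + c) ≤ ∫ t in 1..1 + τ, lagrangian m a x φ φ' t := by
  have hle : (1 : ℝ) ≤ 1 + τ := le_add_of_nonneg_right hτ.le
  have hsq := h.inD.intervalIntegrable_sq hle
  have hkin : τ * mnorm m (w - a) ^ 2 ≤ ∫ t in 1..1 + τ, mnorm m (φ' t) ^ 2 := by
    have := h.inD.mnorm_sq_le_mul_integral hm hle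
    rw [hw, mnorm_smul hm, mul_pow, sq_abs, add_sub_cancel_left, sq, mul_assoc] at this
    exact le_of_mul_le_mul_left this hτ
  calc τ * (mnorm m (w - a) ^ 2 / 2 + c)
      ≤ (∫ t in 1..1 + τ, mnorm m (φ' t) ^ 2) / 2 + τ * c := by linarith
    _ = ∫ t in 1..1 + τ, (mnorm m (φ' t) ^ 2 / 2 + c) := by
        rw [intervalIntegral.integral_add (hsq.div_const 2) intervalIntegrable_const,
          intervalIntegral.integral_div, intervalIntegral.integral_const, add_sub_cancel_left,
          smul_eq_mul]
    _ ≤ ∫ t in 1..1 + τ, lagrangian m a x φ φ' t := by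
        refine intervalIntegral.integral_mono_on hle
          ((hsq.div_const 2).add intervalIntegrable_const)
          (h.intervalIntegrable_lagrangian hτ.le) fun t ht => ?_
        rw [lagrangian]
        gcongr
        exact hU t ht

lemma eventually_norm_hypCurve_sub_lt (hm : ∀ i, 0 < m i) (a x : Conf d N) (D : ℝ) (hδ : 0 < δ) :
    ∀ᶠ τ in 𝓝[>] 0, ∀ φ φ', InD m 1 ⊤ φ φ' → Dnorm m 1 ⊤ φ' ≤ D →
      ∀ t ∈ Icc 1 (1 + τ), ‖hypCurve a x φ t - x‖ < δ := by
  obtain ⟨K, hK, hnorm⟩ := exists_norm_le_mul_mnorm (d := d) hm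
  have hlim : Tendsto (fun τ : ℝ => K * (√τ * D) + τ * ‖a‖) (𝓝 0) (𝓝 0) :=
    Continuous.tendsto' (by fun_prop) _ _ (by simp)
  filter_upwards [nhdsWithin_le_nhds (hlim.eventually_lt_const hδ)] with τ hτδ φ φ' h hD t ht
  have ht₀ : 0 ≤ t - 1 := sub_nonneg.2 ht.1
  have htτ : t - 1 ≤ τ := sub_le_iff_le_add'.2 ht.2
  have hcurve : hypCurve a x φ t - x = φ t + (t - 1) • a := by
    rw [hypCurve]
    module
  calc ‖hypCurve a x φ t - x‖ ≤ ‖φ t‖ + ‖(t - 1) • a‖ := hcurve ▸ norm_add_le _ _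
    _ ≤ K * (√(t - 1) * Dnorm m 1 ⊤ φ') + (t - 1) * ‖a‖ := by
        rw [norm_smul, Real.norm_of_nonneg ht₀]
        gcongr
        exact (hnorm _).trans (by gcongr; exact h.mnorm_le_sqrt_mul_Dnorm hm ht.1)
    _ ≤ K * (√τ * D) + τ * ‖a‖ := by
        gcongr
        exact Real.sqrt_nonneg _
    _ < δ := hτδ

lemma eventually_exists_hypValue_add_le (hm : ∀ i, 0 < m i) (ha : inOmega m a)
    (hx : inOmega m x) (hε : 0 < ε) (hδ : 0 < δ) :
    ∀ᶠ τ in 𝓝[>] 0, ∃ w, inX m w ∧ ‖τ • w‖ < δ ∧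
      hypValue m a (x + τ • w) + τ * ((mnorm m w ^ 2 + mnorm m a ^ 2) / 2 + (U m x - ε)) ≤
        hypValue m a x := by
  obtain ⟨ρ, hρ, hball⟩ := exists_ball_U_sub_lt m hx.2 (half_pos hε)
  obtain ⟨C, hC⟩ := exists_Dnorm_sq_le_integral hm a x
  filter_upwards [self_mem_nhdsWithin, nhdsWithin_le_nhds (eventually_lt_nhds one_pos),
    eventually_norm_hypCurve_sub_lt hm a x (√(4 * ((hypInf m a x ⊤).toReal + ε / 2 + C)))
      (lt_min hδ hρ)] with τ hτ hτ₁ hclose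
  replace hτ : 0 < τ := hτ
  obtain ⟨φ, φ', h, hlt⟩ := exists_finiteAction_lt hm (hypInf_ne_top hm ha hx)
    (lt_add_of_pos_right _ (mul_pos hτ (half_pos hε)))
  have hD : Dnorm m 1 ⊤ φ' ≤ √(4 * ((hypInf m a x ⊤).toReal + ε / 2 + C)) := by
    refine Real.le_sqrt_of_sq_le ?_
    nlinarith [hC φ φ' h.inD h.integrable]
  replace hclose := hclose φ φ' h.inD hD
  obtain ⟨w, hw⟩ : ∃ w, φ (1 + τ) = τ • (w - a) :=
    ⟨τ⁻¹ • φ (1 + τ) + a, by rw [add_sub_cancel_right, smul_inv_smul₀ hτ.ne']⟩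
  have hend : hypCurve a x φ (1 + τ) = x + τ • w := by
    rw [hypCurve, hw]
    module
  have hle : (1 : ℝ) ≤ 1 + τ := le_add_of_nonneg_right hτ.le
  refine ⟨w, ?_, ?_, ?_⟩
  · have := ((h.inD.inX_apply hle).smul τ⁻¹).add ha.1
    rwa [hw, inv_smul_smul₀ hτ.ne', sub_add_cancel] at this
  · simpa [hend] using (hclose (1 + τ) ⟨hle, le_rfl⟩).trans_le (min_le_left _ _)
  · have hkin := h.mul_le_integral_lagrangian hm hτ hw (c := U m x - ε / 2) fun t ht => by
      linarith [(abs_lt.1 (hball _ ((hclose t ht).trans_le (min_le_right _ _))).2).1]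
    have htail := h.integral_lagrangian_add_toReal_hypInf_le hm hτ.le
    rw [hend] at htail
    rw [hypValue_add_smul_add hm, hypValue]
    linarith

end DynamicProgramming

/-! ### The viscosity inequalities -/

section Viscosity

lemma exists_ball_of_eventually_nhdsWithin_sdiff {P : Conf d N → Prop}
    (hP : ∀ᶠ y in 𝓝[setX m \ {x}] x, P y) (hx : P x) :
    ∃ δ > 0, ∀ y, inX m y → ‖y - x‖ < δ → P y := by
  obtain ⟨δ, hδ, hball⟩ := Metric.mem_nhdsWithin_iff.1 hP
  refine ⟨δ, hδ, fun y hy hyx => ?_⟩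
  obtain rfl | hne := eq_or_ne y x
  · exact hx
  · exact hball ⟨mem_ball_iff_norm.2 hyx, hy, hne⟩

lemma le_apply_zero_of_forall_pos {f : ℝ → ℝ} (hf : Continuous f) {b : ℝ}
    (h : ∀ ε > 0, b ≤ f ε) : b ≤ f 0 :=
  ge_of_tendsto ((hf.tendsto 0).mono_left nhdsWithin_le_nhds)
    (eventually_mem_nhdsWithin.mono fun ε (hε : ε ∈ Ioi 0) => h ε hε)

lemma InSuperdiff.mnorm_sq_div_two_sub_U_le (hm : ∀ i, 0 < m i) (ha : inOmega m a)
    (hx : inOmega m x) (hp : inX m p)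
    (h : InSuperdiff m (hypValue m a) x p) :
    mnorm m p ^ 2 / 2 - U m x ≤ mnorm m a ^ 2 / 2 := by
  suffices hε : ∀ ε > 0,
      mnorm m p ^ 2 / 2 - U m x ≤ mnorm m a ^ 2 / 2 + ε * (1 + mnorm m p) by
    simpa using le_apply_zero_of_forall_pos (by fun_prop) hε
  intro ε hε
  obtain ⟨δ, hδ, hball⟩ := exists_ball_of_eventually_nhdsWithin_sdiff (h ε hε) (by simp)
  obtain ⟨τ, hτ, hτδ, hstep⟩ := (eventually_mem_nhdsWithin.and
    ((eventually_norm_smul_lt (-p) hδ).and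
      (eventually_hypValue_le_add hm ha hx hp.neg hε))).exists
  have hdiff := hball (x + τ • -p) (hx.1.add (hp.neg.smul τ)) (by simpa using hτδ)
  rw [add_sub_cancel_left, minner_smul_right, minner_neg_self hm, mnorm_smul hm,
    abs_of_pos hτ, mnorm_neg] at hdiff
  rw [mnorm_neg] at hstep
  refine le_of_mul_le_mul_left ?_ hτ
  linarith

lemma InSubdiff.le_mnorm_sq_div_two_sub_U (hm : ∀ i, 0 < m i) (ha : inOmega m a)
    (hx : inOmega m x) (h : InSubdiff m (hypValue m a) x p) :
    mnorm m a ^ 2 / 2 ≤ mnorm m p ^ 2 / 2 - U m x := by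
  suffices hε : ∀ ε > 0,
      mnorm m a ^ 2 / 2 ≤ (mnorm m p + ε) ^ 2 / 2 + ε - U m x by
    simpa using le_apply_zero_of_forall_pos (by fun_prop) hε
  intro ε hε
  obtain ⟨δ, hδ, hball⟩ := exists_ball_of_eventually_nhdsWithin_sdiff (h ε hε) (by simp)
  obtain ⟨τ, hτ, w, hw, hτδ, hstep⟩ := (eventually_mem_nhdsWithin.and
    (eventually_exists_hypValue_add_le hm ha hx hε hδ)).exists
  have hdiff := hball (x + τ • w) (hx.1.add (hw.smul τ)) (by simpa using hτδ)
  rw [add_sub_cancel_left, minner_smul_right, mnorm_smul hm, abs_of_pos hτ] at hdiff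
  have hcs := neg_mnorm_mul_mnorm_le_minner hm p w
  have hquadratic : (mnorm m w ^ 2 + mnorm m a ^ 2) / 2 + U m x - ε ≤
      (mnorm m p + ε) * mnorm m w := by
    refine le_of_mul_le_mul_left ?_ hτ
    have := mul_le_mul_of_nonneg_left hcs (le_of_lt hτ)
    linarith
  linarith [sq_nonneg (mnorm m w - (mnorm m p + ε))]

end Viscosity

theorem value_function_viscosity_hyperbolic_general {d N : ℕ} (m : Fin N → ℝ) (hm : ∀ i, 0 < m i)
    (a : Conf d N) (ha : inOmega m a) (x : Conf d N) (hx : inOmega m x) :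
    (∀ p : Conf d N, inX m p → InSuperdiff m (hypValue m a) x p →
      (mnorm m p) ^ 2 / 2 - U m x ≤ (mnorm m a) ^ 2 / 2) ∧
    (∀ p : Conf d N, inX m p → InSubdiff m (hypValue m a) x p →
      (mnorm m a) ^ 2 / 2 ≤ (mnorm m p) ^ 2 / 2 - U m x) :=
  ⟨fun _ hp h => h.mnorm_sq_div_two_sub_U_le hm ha hx hp,
    fun _ _ h => h.le_mnorm_sq_div_two_sub_U hm ha hx⟩

/-- **Hamilton–Jacobi theorem, hyperbolic case** : the renormalized value function
`v(x) = min_φ A_x(φ) − ⟨a, x⟩_M` is a viscosity solution on `Ω` of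
`½‖∇v‖_M² − U = ‖a‖_M²/2` : for every `x ∈ Ω`, `½‖p‖_M² − U(x) ≤ ‖a‖_M²/2` for all
`p ∈ D⁺v(x)` and `½‖p‖_M² − U(x) ≥ ‖a‖_M²/2` for all `p ∈ D⁻v(x)`. -/
theorem value_function_viscosity_hyperbolic {d N : ℕ} (hd : 2 ≤ d) (hN : 2 ≤ N)
    (m : Fin N → ℝ) (hm : ∀ i, 0 < m i)
    (a : Conf d N) (ha : inOmega m a)
    (x : Conf d N) (hx : inOmega m x) :
    (∀ p : Conf d N, inX m p → InSuperdiff m (hypValue m a) x p →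
      (mnorm m p) ^ 2 / 2 - U m x ≤ (mnorm m a) ^ 2 / 2) ∧
    (∀ p : Conf d N, inX m p → InSubdiff m (hypValue m a) x p →
      (mnorm m a) ^ 2 / 2 ≤ (mnorm m p) ^ 2 / 2 - U m x) :=
  value_function_viscosity_hyperbolic_general m hm a ha x hx

end NBodyHJ
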